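/- arXiv:math/9910152 — 2 statements merged into one kernel-verified Lean document; each statement's English description precedes it below -/
import Mathlib

section
/- Let F be a homeomorphism of the annulus A = T^1 × R homotopic to the identity, f a lift of F to R^2, and K a nonempty compact F-invariant subset of A. Let [α, β] be the rotation set of K, i.e. the set of integrals ∫ φ dμ over F-invariant Borel probability measures μ supported in K, where φ lifts p₁∘f − p₁. Then for every ε > 0 there exists N ≥ 0 such that for every z in π^{-1}(K) and every n ≥ N, α − ε < (p₁(f^n(z)) − p₁(z))/n < β + ε. -/
open MeasureTheory Filter Set

noncomputable section

/-- The infinite annulus `𝔸 = T¹ × ℝ`. -/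
abbrev 𝔸 : Type := AddCircle (1 : ℝ) × ℝ

/-- The covering projection `π : ℝ² → 𝔸`. -/
def πA : ℝ × ℝ → 𝔸 := fun p => ((p.1 : AddCircle (1 : ℝ)), p.2)

/-- The deck transformation `T(x,y) = (x+1,y)`. -/
def TA : ℝ × ℝ → ℝ × ℝ := fun p => (p.1 + 1, p.2)

/-- The rotation set of a compact invariant set `K`: all integrals `∫ φ dμ` over
`F`-invariant Borel probability measures supported in `K`, where `φ` lifts `p₁∘f - p₁`. -/
def rotSet (F : 𝔸 ≃ₜ 𝔸) (φ : 𝔸 → ℝ) (K : Set 𝔸) : Set ℝ :=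
  {r | ∃ μ : Measure 𝔸, IsProbabilityMeasure μ ∧
        (∀ s : Set 𝔸, MeasurableSet s → μ ((⇑F) ⁻¹' s) = μ s) ∧
        μ Kᶜ = 0 ∧ r = ∫ x, φ x ∂μ}

theorem krylov_bogolyubov_aux {X : Type*} [TopologicalSpace X] [T2Space X] [CompactSpace X]
    [MeasurableSpace X] [BorelSpace X] [HasOuterApproxClosed X]
    (T : X → X) (hT : Continuous T) (g : X → ℝ) (hg : Continuous g) (c : ℝ)
    (h : ∀ N : ℕ, ∃ x : X, ∃ n : ℕ, N ≤ n ∧ c * n ≤ birkhoffSum T g n x) :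
    ∃ μ : Measure X, IsProbabilityMeasure μ ∧ μ.map T = μ ∧ c ≤ ∫ x, g x ∂μ := by
  choose x n hn hc using fun N => h (N + 1)
  have hnpos : ∀ N, (0 : ℝ) < n N := fun N => by
    have := hn N
    exact_mod_cast (by omega : 0 < n N)
  let m : ℕ → Measure X := fun N =>
    (n N : ENNReal)⁻¹ • ∑ k ∈ Finset.range (n N), Measure.dirac (T^[k] (x N))
  have hm : ∀ N, IsProbabilityMeasure (m N) := fun N => by
    constructor
    have := hn N
    simp only [m, Measure.smul_apply, Measure.finsetSum_apply, measure_univ, Finset.sum_const,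
      Finset.card_range, smul_eq_mul, nsmul_eq_mul, mul_one]
    exact ENNReal.inv_mul_cancel (by simp; omega) (by simp)
  have hint : ∀ N (u : X → ℝ), Continuous u →
      ∫ y, u y ∂(m N) = (n N : ℝ)⁻¹ * birkhoffSum T u (n N) (x N) := fun N u hu => by
    simp only [m, integral_smul_measure, birkhoffSum]
    rw [integral_finsetSum_measure]
    · simp [integral_dirac]
    · intro i _
      exact integrable_dirac (by simp)
  let P : ℕ → ProbabilityMeasure X := fun N => ⟨m N, hm N⟩
  obtain ⟨μ, -, hμ⟩ := (isCompact_univ (X := ProbabilityMeasure X)).ultrafilter_le_nhds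
    ((hyperfilter ℕ).map P) (by simp)
  have hlim : ∀ u : BoundedContinuousFunction X ℝ,
      Tendsto (fun N => (n N : ℝ)⁻¹ * birkhoffSum T u (n N) (x N)) (hyperfilter ℕ)
        (nhds (∫ y, u y ∂(μ : Measure X))) := fun u => by
    have h1 : Tendsto P (hyperfilter ℕ) (nhds μ) := hμ
    have h2 := (ProbabilityMeasure.tendsto_iff_forall_integral_tendsto.1 h1) u
    refine h2.congr fun N => ?_
    exact hint N u u.continuous
  have hatTop : (hyperfilter ℕ : Filter ℕ) ≤ atTop := Nat.hyperfilter_le_atTop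
  refine ⟨μ, inferInstance, ?_, ?_⟩
  · have : IsProbabilityMeasure ((μ : Measure X).map T) :=
      Measure.isProbabilityMeasure_map hT.aemeasurable
    refine ext_of_forall_integral_eq_of_IsFiniteMeasure fun u => ?_
    rw [integral_map hT.aemeasurable u.continuous.aestronglyMeasurable]
    have h1 := hlim (u.compContinuous ⟨T, hT⟩)
    have h2 := hlim u
    have h3 := h1.sub h2
    have h4 : Tendsto (fun N => (n N : ℝ)⁻¹ *
        birkhoffSum T (u.compContinuous ⟨T, hT⟩) (n N) (x N)
        - (n N : ℝ)⁻¹ * birkhoffSum T u (n N) (x N)) (hyperfilter ℕ) (nhds 0) := by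
      have hz : Tendsto (fun N : ℕ => (2 * ‖u‖) * (1 / ((N : ℝ) + 1))) (hyperfilter ℕ)
          (nhds 0) := by
        have := (tendsto_one_div_add_atTop_nhds_zero_nat (𝕜 := ℝ)).const_mul (2 * ‖u‖)
        rw [mul_zero] at this
        exact this.mono_left hatTop
      refine squeeze_zero_norm (fun N => ?_) hz
      have e : birkhoffSum T (u.compContinuous ⟨T, hT⟩) (n N) (x N)
          = birkhoffSum T u (n N) (T (x N)) := by
        simp only [birkhoffSum, BoundedContinuousFunction.compContinuous_apply,
          ContinuousMap.coe_mk]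
        refine Finset.sum_congr rfl fun k _ => ?_
        rw [← Function.iterate_succ_apply, Function.iterate_succ_apply']
      rw [e, ← mul_sub, birkhoffSum_apply_sub_birkhoffSum, norm_mul, mul_comm]
      refine mul_le_mul ?_ ?_ (norm_nonneg _) (by positivity)
      · refine (norm_sub_le _ _).trans ?_
        have a := u.norm_coe_le_norm (T^[n N] (x N))
        have b := u.norm_coe_le_norm (x N)
        linarith
      · rw [norm_inv, Real.norm_of_nonneg (hnpos N).le, one_div]
        refine inv_anti₀ (by positivity) ?_
        exact_mod_cast hn N
    have := tendsto_nhds_unique h3 h4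
    exact sub_eq_zero.1 this
  · have h1 := hlim (BoundedContinuousFunction.mkOfCompact ⟨g, hg⟩)
    refine ge_of_tendsto' h1 fun N => ?_
    have := hc N
    rw [inv_mul_eq_div, le_div_iff₀ (hnpos N)]
    exact this

theorem πA_isOpenQuotientMap : IsOpenQuotientMap πA := by
  have h1 : IsOpenQuotientMap (fun x : ℝ => (x : AddCircle (1 : ℝ))) :=
    ⟨QuotientAddGroup.mk_surjective, continuous_quot_mk, QuotientAddGroup.isOpenMap_coe⟩
  exact h1.prodMap IsOpenQuotientMap.id

theorem rot_upper
    (F : 𝔸 ≃ₜ 𝔸) (K : Set 𝔸) (hKcpt : IsCompact K) (hKinv : F '' K = K)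
    (φ ψ : 𝔸 → ℝ) (hψ : Continuous ψ) (σ : ℝ) (hσ : ∀ x, ψ x = σ * φ x) (b ε : ℝ) (hε : 0 < ε)
    (hb : ∀ r ∈ rotSet F φ K, σ * r ≤ b) :
    ∃ N : ℕ, ∀ q ∈ K, ∀ n : ℕ, N ≤ n → birkhoffSum F ψ n q < (b + ε) * n := by
  by_contra! hcon
  have hmaps : MapsTo F K K := fun x hx => hKinv ▸ mem_image_of_mem F hx
  haveI : CompactSpace K := isCompact_iff_compactSpace.1 hKcpt
  let T : K → K := hmaps.restrict
  have hT : Continuous T := F.continuous.restrict hmaps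
  have hit : ∀ k (x : K), ((T^[k] x : K) : 𝔸) = F^[k] x := fun k x => by
    induction k with
    | zero => rfl
    | succ k ih => rw [Function.iterate_succ_apply', Function.iterate_succ_apply', ← ih]; rfl
  obtain ⟨μ, hμ, hinv, hle⟩ := krylov_bogolyubov_aux T hT (fun x : K => ψ x)
    (hψ.comp continuous_subtype_val) (b + ε) (fun N => by
      obtain ⟨q, hq, n, hn, hle⟩ := hcon N
      refine ⟨⟨q, hq⟩, n, hn, hle.trans_eq ?_⟩
      simp only [birkhoffSum, hit])
  have hr : (∫ x, φ x ∂(μ.map Subtype.val)) ∈ rotSet F φ K := by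
    refine ⟨μ.map Subtype.val, Measure.isProbabilityMeasure_map measurable_subtype_coe.aemeasurable,
      ?_, ?_, rfl⟩
    · intro s hs
      rw [Measure.map_apply measurable_subtype_coe hs,
        Measure.map_apply measurable_subtype_coe (F.continuous.measurable hs)]
      conv_rhs => rw [← hinv]
      rw [Measure.map_apply hT.measurable (measurable_subtype_coe hs)]
      rfl
    · rw [Measure.map_apply measurable_subtype_coe hKcpt.isClosed.measurableSet.compl]
      simp
  have h1 := hb _ hr
  rw [← integral_const_mul] at h1
  simp only [← hσ] at h1
  rw [integral_map measurable_subtype_coe.aemeasurable hψ.aestronglyMeasurable] at h1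
  linarith

theorem stmt0
    (F : 𝔸 ≃ₜ 𝔸) (f : ℝ × ℝ → ℝ × ℝ) (hf : Continuous f)
    (hlift : ∀ p, πA (f p) = F (πA p)) (hdeck : ∀ p, f (TA p) = TA (f p))
    (K : Set 𝔸) (hKne : K.Nonempty) (hKcpt : IsCompact K) (hKinv : F '' K = K)
    (φ : 𝔸 → ℝ) (hφ : ∀ p : ℝ × ℝ, φ (πA p) = (f p).1 - p.1)
    (α β : ℝ) (hrot : rotSet F φ K = Set.Icc α β) :
    ∀ ε > (0 : ℝ), ∃ N : ℕ, ∀ p : ℝ × ℝ, πA p ∈ K → ∀ n : ℕ, N ≤ n →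
      α - ε < ((f^[n] p).1 - p.1) / n ∧ ((f^[n] p).1 - p.1) / n < β + ε := by
  have hφc : Continuous φ := by
    rw [πA_isOpenQuotientMap.isQuotientMap.continuous_iff]
    have : φ ∘ πA = fun p => (f p).1 - p.1 := funext hφ
    rw [this]
    fun_prop
  have hπ : ∀ n p, πA (f^[n] p) = F^[n] (πA p) := fun n p => by
    induction n with
    | zero => rfl
    | succ k ih => rw [Function.iterate_succ_apply', Function.iterate_succ_apply', hlift, ih]
  have hsum : ∀ n p, birkhoffSum F φ n (πA p) = (f^[n] p).1 - p.1 := fun n p => by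
    induction n with
    | zero => simp
    | succ k ih =>
      rw [birkhoffSum_succ, ih, ← hπ, hφ, Function.iterate_succ_apply']
      ring
  intro ε hε
  obtain ⟨N₁, h₁⟩ := rot_upper F K hKcpt hKinv φ φ hφc 1 (by simp) β ε hε (fun r hr => by
    rw [hrot] at hr
    linarith [hr.2])
  obtain ⟨N₂, h₂⟩ := rot_upper F K hKcpt hKinv φ (-φ) hφc.neg (-1) (by simp) (-α) ε hε
    (fun r hr => by
      rw [hrot] at hr
      linarith [hr.1])
  refine ⟨max 1 (max N₁ N₂), fun p hp n hn => ?_⟩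
  have hn0 : (0 : ℝ) < n := by
    have : 1 ≤ n := (le_max_left _ _).trans hn
    exact_mod_cast this
  have a₁ := h₁ _ hp n (by omega)
  have a₂ := h₂ _ hp n (by omega)
  have hneg : birkhoffSum F (-φ) n (πA p) = -birkhoffSum F φ n (πA p) := by
    simp [birkhoffSum]
  rw [hneg, hsum] at a₂
  rw [hsum] at a₁
  rw [lt_div_iff₀ hn0, div_lt_iff₀ hn0]
  constructor <;> linarith
end
end

section
/- Let F be a homeomorphism of the annulus A = T^1 × R homotopic to the identity, f a lift of F, and K a nonempty compact F-invariant subset of A whose rotation set is a single point {α}. Then the sequence of functions z ↦ (p₁(f^n(z)) − p₁(z))/n converges uniformly on π^{-1}(K) to the constant α. -/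
open MeasureTheory Filter Set

noncomputable section

open Topology in
theorem empirical_uniform {X : Type*} [TopologicalSpace X] [CompactSpace X] [T2Space X]
    [MeasurableSpace X] [BorelSpace X] [HasOuterApproxClosed X]
    (G : X → X) (hG : Continuous G) (ψ : X → ℝ) (hψ : Continuous ψ) (α : ℝ)
    (hα : ∀ μ : Measure X, IsProbabilityMeasure μ → μ.map G = μ → ∫ x, ψ x ∂μ = α)
    (ε : ℝ) (hε : 0 < ε) :
    ∃ N : ℕ, ∀ n ≥ N, ∀ x : X, |(∑ i ∈ Finset.range n, ψ (G^[i] x)) / n - α| < ε := by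
  by_contra! hcon
  choose n hn x hx using fun N : ℕ => hcon (N + 1)
  have hn0 : ∀ N, (n N : ENNReal) ≠ 0 := fun N => by
    have := hn N
    exact_mod_cast (by omega : n N ≠ 0)
  let ν : ℕ → Measure X := fun N =>
    (n N : ENNReal)⁻¹ • ∑ i ∈ Finset.range (n N), Measure.dirac (G^[i] (x N))
  have hν : ∀ N, IsProbabilityMeasure (ν N) := fun N => ⟨by
    simp [ν, ENNReal.inv_mul_cancel (hn0 N) (ENNReal.natCast_ne_top _)]⟩
  have hint : ∀ N (g : X → ℝ), Continuous g →
      ∫ y, g y ∂(ν N) = (∑ i ∈ Finset.range (n N), g (G^[i] (x N))) / n N := by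
    intro N g hg
    simp only [ν]
    rw [integral_smul_measure, integral_finsetSum_measure]
    · simp [integral_dirac, div_eq_inv_mul]
    · intro i _
      exact (integrable_dirac (by simp [enorm_lt_top]))
  let P : ℕ → ProbabilityMeasure X := fun N => ⟨ν N, hν N⟩
  let U : Ultrafilter ℕ := Ultrafilter.of atTop
  have hU : (U : Filter ℕ) ≤ atTop := Ultrafilter.of_le atTop
  obtain ⟨μ, -, hμ⟩ := (isCompact_univ (X := ProbabilityMeasure X)).ultrafilter_le_nhds
    (U.map P) (by simp)
  have hlim : Tendsto P U (𝓝 μ) := hμ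
  rw [ProbabilityMeasure.tendsto_iff_forall_integral_tendsto] at hlim
  have hlim' : ∀ g : X → ℝ, Continuous g →
      Tendsto (fun N => (∑ i ∈ Finset.range (n N), g (G^[i] (x N))) / n N) U
        (𝓝 (∫ y, g y ∂(μ : Measure X))) := by
    intro g hg
    have h := hlim (BoundedContinuousFunction.mkOfCompact ⟨g, hg⟩)
    refine h.congr (fun N => ?_)
    exact hint N g hg
  have hntop : Tendsto (fun N => (n N : ℝ)) U atTop := by
    refine Tendsto.mono_left ?_ hU
    refine tendsto_natCast_atTop_atTop.comp ?_
    exact tendsto_atTop_mono (fun N => by have := hn N; show N ≤ n N; omega) tendsto_id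
  have hinv : (μ : Measure X).map G = μ := by
    have : IsProbabilityMeasure ((μ : Measure X).map G) :=
      Measure.isProbabilityMeasure_map hG.aemeasurable
    apply ext_of_forall_integral_eq_of_IsFiniteMeasure
    intro g
    rw [integral_map hG.aemeasurable g.continuous.measurable.aestronglyMeasurable]
    have h1 := (hlim' (fun y => g (G y)) (g.continuous.comp hG)).sub (hlim' g g.continuous)
    have h2 : Tendsto (fun N => (∑ i ∈ Finset.range (n N), g (G (G^[i] (x N)))) / n N -
        (∑ i ∈ Finset.range (n N), g (G^[i] (x N))) / n N) U (𝓝 0) := by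
      have h3 : Tendsto (fun N => (2 * ‖g‖) / (n N : ℝ)) U (𝓝 0) :=
        tendsto_const_nhds.div_atTop hntop
      refine squeeze_zero_norm (fun N => ?_) h3
      rw [← sub_div, ← Finset.sum_sub_distrib]
      have h4 : ∑ i ∈ Finset.range (n N), (g (G (G^[i] (x N))) - g (G^[i] (x N)))
          = g (G^[n N] (x N)) - g (x N) := by
        have := Finset.sum_range_sub (fun i => g (G^[i] (x N))) (n N)
        simpa only [Function.iterate_succ_apply', Function.iterate_zero, id] using this
      rw [h4, norm_div, Real.norm_natCast]
      gcongr
      calc _ ≤ ‖g (G^[n N] (x N))‖ + ‖g (x N)‖ := norm_sub_le _ _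
        _ ≤ ‖g‖ + ‖g‖ := add_le_add (g.norm_coe_le_norm _) (g.norm_coe_le_norm _)
        _ = _ := by ring
    exact sub_eq_zero.mp (tendsto_nhds_unique h1 h2)
  have hval := hα μ inferInstance hinv
  have h5 := hlim' ψ hψ
  rw [hval] at h5
  have h6 := (Metric.tendsto_nhds.mp h5 ε hε).exists
  obtain ⟨N, hN⟩ := h6
  rw [Real.dist_eq] at hN
  exact absurd hN (not_lt.mpr (hx N))

theorem πA_quot : Topology.IsQuotientMap πA :=
  (IsOpenQuotientMap.prodMap (QuotientAddGroup.isOpenQuotientMap_mk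
    (N := AddSubgroup.zmultiples (1 : ℝ))) IsOpenQuotientMap.id).isQuotientMap

theorem stmt1
    (F : 𝔸 ≃ₜ 𝔸) (f : ℝ × ℝ → ℝ × ℝ) (hf : Continuous f)
    (hlift : ∀ p, πA (f p) = F (πA p)) (hdeck : ∀ p, f (TA p) = TA (f p))
    (K : Set 𝔸) (hKne : K.Nonempty) (hKcpt : IsCompact K) (hKinv : F '' K = K)
    (φ : 𝔸 → ℝ) (hφ : ∀ p : ℝ × ℝ, φ (πA p) = (f p).1 - p.1)
    (α : ℝ) (hrot : rotSet F φ K = {α}) :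
    TendstoUniformlyOn (fun (n : ℕ) (p : ℝ × ℝ) => ((f^[n] p).1 - p.1) / n)
      (fun _ => α) atTop (πA ⁻¹' K) := by
  have hφc : Continuous φ := by
    rw [πA_quot.continuous_iff]
    have : φ ∘ πA = fun p => (f p).1 - p.1 := funext hφ
    rw [this]
    fun_prop
  have hmaps : MapsTo F K K := fun z hz => hKinv ▸ mem_image_of_mem F hz
  have : CompactSpace K := isCompact_iff_compactSpace.mp hKcpt
  let G : K → K := hmaps.restrict F K K
  have hG : Continuous G := F.continuous.restrict hmaps
  have hGval : ∀ i (z : K), ((G^[i] z : K) : 𝔸) = F^[i] z := by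
    intro i z
    induction i with
    | zero => rfl
    | succ i ih => rw [Function.iterate_succ_apply', Function.iterate_succ_apply', ← ih]; rfl
  have hsum : ∀ (n : ℕ) p, (f^[n] p).1 - p.1 = ∑ i ∈ Finset.range n, φ (F^[i] (πA p)) := by
    intro n p
    have hit : ∀ i, F^[i] (πA p) = πA (f^[i] p) := by
      intro i
      induction i with
      | zero => rfl
      | succ i ih => rw [Function.iterate_succ_apply', Function.iterate_succ_apply', ih, hlift]
    have := Finset.sum_range_sub (fun i => (f^[i] p).1) n
    simp only [Function.iterate_zero, id] at this
    rw [← this]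
    refine Finset.sum_congr rfl fun i _ => ?_
    rw [hit, hφ, Function.iterate_succ_apply']
  have key := empirical_uniform G hG (fun z : K => φ z) (hφc.comp continuous_subtype_val) α (by
    intro μ hμ hinv
    have hmem : (∫ z, φ z ∂(μ.map ((↑) : K → 𝔸))) ∈ rotSet F φ K := by
      refine ⟨μ.map (↑), Measure.isProbabilityMeasure_map measurable_subtype_coe.aemeasurable,
        ?_, ?_, rfl⟩
      · intro s hs
        rw [Measure.map_apply measurable_subtype_coe hs,
          Measure.map_apply measurable_subtype_coe (F.continuous.measurable hs)]
        conv_rhs => rw [← hinv, Measure.map_apply hG.measurable (measurable_subtype_coe hs)]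
        rfl
      · rw [Measure.map_apply measurable_subtype_coe hKcpt.isClosed.measurableSet.compl]
        simp
    rw [hrot, mem_singleton_iff, integral_map measurable_subtype_coe.aemeasurable
      hφc.measurable.aestronglyMeasurable] at hmem
    exact hmem)
  rw [Metric.tendstoUniformlyOn_iff]
  intro ε hε
  obtain ⟨N, hN⟩ := key ε hε
  filter_upwards [eventually_ge_atTop N] with n hn p hp
  have h := hN n hn ⟨πA p, hp⟩
  simp only [hGval] at h
  rw [dist_comm, Real.dist_eq, hsum]
  exact h
end
end
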